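/- There exists a (possibly infinite) deterministic matrix M = ⟨V, ⊞_M, D⟩, where V is a set, ⊞_M : V × V → V is a function, and D ⊆ V, such that for all sets of formulas Γ, Δ: Γ ⊩_M Δ if and only if Γ ⊩_⊞ Δ. -/

import Mathlib

/-- Formulas built from countably many propositional variables with a single
binary connective `⊞` (platypus). -/
inductive Fm : Type where
  | var : ℕ → Fm
  | pl : Fm → Fm → Fm
deriving DecidableEq

namespace Fm

/-- The set of propositional variables occurring in a formula. -/
def vars : Fm → Set ℕ
  | var n => {n}
  | pl a b => vars a ∪ vars b

/-- A `𝔅_⊞`-valuation: a two-valued function such that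
`v (φ ⊞ ψ) ∈ {min (v φ) (v ψ), max (v φ) (v ψ)}`. -/
def IsVal (v : Fm → Bool) : Prop :=
  ∀ a b : Fm, v (a.pl b) = (v a && v b) ∨ v (a.pl b) = (v a || v b)

/-- The multiple-conclusion consequence `Γ ⊩_⊞ Δ`. -/
def Mc (Γ Δ : Set Fm) : Prop :=
  ∀ v : Fm → Bool, IsVal v → (∀ φ ∈ Γ, v φ = true) → ∃ ψ ∈ Δ, v ψ = true

/-- The single-conclusion consequence `Γ ⊢_⊞ φ`. -/
def Sc (Γ : Set Fm) (φ : Fm) : Prop := Mc Γ {φ}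

end Fm

namespace Fm

/-- An `M`-valuation for a deterministic matrix `⟨V, op, D⟩`. -/
def IsMatVal {V : Type} (op : V → V → V) (v : Fm → V) : Prop :=
  ∀ a b : Fm, v (a.pl b) = op (v a) (v b)

/-- The multiple-conclusion consequence `Γ ⊩_M Δ` of a deterministic matrix. -/
def MatMc {V : Type} (op : V → V → V) (D : Set V) (Γ Δ : Set Fm) : Prop :=
  ∀ v : Fm → V, IsMatVal op v → (∀ φ ∈ Γ, v φ ∈ D) → ∃ ψ ∈ Δ, v ψ ∈ D

end Fm

open Fm in
/-- there is a (possibly infinite) deterministic matrix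
`M = ⟨V, ⊞_M, D⟩` characterizing `⊩_⊞`. -/
theorem platypus_single_matrix :
    ∃ (V : Type) (op : V → V → V) (D : Set V),
      ∀ Γ Δ : Set Fm, MatMc op D Γ Δ ↔ Mc Γ Δ := by
  classical
  refine ⟨Fm × {v : Fm → Bool // IsVal v},
    fun x y => if x.2 = y.2 then (x.1.pl y.1, x.2) else x,
    {x | x.2.1 x.1 = true}, fun Γ Δ => ⟨?_, ?_⟩⟩
  · intro h v hv hΓ
    exact h (fun φ => (φ, ⟨v, hv⟩)) (fun a b => by simp) hΓ
  · intro h w hw hΓ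
    refine h (fun φ => (w φ).2.1 (w φ).1) (fun a b => ?_) hΓ
    have hab := hw a b
    by_cases e : (w a).2 = (w b).2
    · simp only [e, if_true] at hab
      simp only [hab, e]
      exact (w b).2.2 _ _
    · simp only [e, if_false] at hab
      simp only [hab]
      generalize (w a).2.1 (w a).1 = p
      generalize (w b).2.1 (w b).1 = q
      cases p <;> cases q <;> simp
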